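/- arXiv:0807.0595 — 3 statements merged into one kernel-verified Lean document; each statement's English description precedes it below -/
import Mathlib

section
/- Let q be a prime power, let ξ ∈ GF(q^m)* have multiplicative order n and degree m over GF(q), and let C = C(n,q,{ξ}) be the cyclic code of length n over GF(q) with defining zero ξ. A permutation π of {0, 1, …, n−1} is a permutation automorphism of C if and only if there exists a q-polynomial L(x) = L_0 x + L_1 x^q + ⋯ + L_{m−1} x^{q^{m−1}} with coefficients in GF(q^m) such that L(ξ^i) = ξ^{π(i)} for all i = 0, …, n−1. -/
open Polynomial

/-- The subgroup `⟨ξ⟩ = {1, ξ, ξ², …}` of powers of an element `ξ`. -/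
def powersOf {E : Type*} [Monoid E] (ξ : E) : Set E := {x | ∃ k : ℕ, x = ξ ^ k}

/-- The map `x ↦ L₀x + L₁x^q + ⋯ + L_{m-1}x^{q^{m-1}}` given by the `q`-polynomial
with coefficient vector `c`. -/
def qPolyMap {E : Type*} [Field E] (q : ℕ) {m : ℕ} (c : Fin m → E) (x : E) : E :=
  ∑ i : Fin m, c i * x ^ q ^ (i : ℕ)

/-- `u` is a linear recurring sequence (an `f`-sequence) with characteristic polynomial
`f = xᵐ - σ_{m-1}x^{m-1} - ⋯ - σ₀`, i.e. `u_{k+m} = σ_{m-1}u_{k+m-1} + ⋯ + σ₀u_k`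
where `σᵢ = -(f.coeff i)`. -/
def IsLRS {F E : Type*} [Field F] [Field E] [Algebra F E] (f : Polynomial F) (u : ℕ → E) : Prop :=
  ∀ k : ℕ, u (k + f.natDegree) =
    ∑ i ∈ Finset.range f.natDegree, algebraMap F E (-(f.coeff i)) * u (k + i)

/-- The `q`-order of `ξ` over `F`: the least `d > 0` with `ξ ^ d ∈ F`. -/
noncomputable def qOrder (F : Type*) {E : Type*} [Field F] [Field E] [Algebra F E] (ξ : E) : ℕ :=
  sInf {d : ℕ | 0 < d ∧ ξ ^ d ∈ Set.range (algebraMap F E)}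

/-- `ξ` is nonstandard of degree `m` over `F`: its minimal polynomial `f` over `F` has
degree `m`, and `⟨ξ⟩` can be generated by an `f`-sequence `u` of smallest period `|⟨ξ⟩|`
with `u 0 = 1` and `(u_0, …, u_{m-1}) ≠ (1, ζ, …, ζ^{m-1})` for every zero `ζ` of `f`. -/
def IsNonstandard (F : Type*) {E : Type*} [Field F] [Field E] [Algebra F E]
    (m : ℕ) (ξ : E) : Prop :=
  (minpoly F ξ).natDegree = m ∧
  ∃ u : ℕ → E, IsLRS (minpoly F ξ) u ∧
    IsLeast {p : ℕ | 0 < p ∧ ∀ k, u (k + p) = u k} (orderOf ξ) ∧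
    Set.range u = powersOf ξ ∧
    u 0 = 1 ∧
    ∀ ζ : E, (aeval ζ) (minpoly F ξ) = 0 → ∃ i : Fin m, u (i : ℕ) ≠ ζ ^ (i : ℕ)

/-! The code is the space of linear relations over `GF(q)` between the elements `ξⁱ`. A family
`w` satisfies every linear relation between the members of a family `v` iff some linear map sends
each `vᵢ` to `wᵢ`, so `π` is an automorphism of the code iff some linear map sends each `ξⁱ` to
`ξ^{π⁻¹(i)}`. As `π` has finite order, its inverse may be replaced by `π` itself on passing to a
power of that map. Finally, the `GF(q)`-linear endomorphisms of `GF(qᵐ)` are exactly the maps given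
by `q`-polynomials with `m` coefficients: the first `m` powers of the Frobenius are linearly
independent by Dedekind, and `m` is the dimension of `End(GF(qᵐ))` over `GF(qᵐ)`. -/

section LinearRelations

variable {K U V W ι : Type*} [DivisionRing K] [AddCommGroup U] [Module K U]
  [AddCommGroup V] [Module K V] [AddCommGroup W] [Module K W]

theorem exists_linearMap_comp_eq_iff_ker_le_ker {f : U →ₗ[K] V} {g : U →ₗ[K] W} :
    (∃ T : V →ₗ[K] W, T ∘ₗ f = g) ↔ LinearMap.ker f ≤ LinearMap.ker g := by
  constructor
  · rintro ⟨T, rfl⟩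
    exact LinearMap.ker_le_ker_comp f T
  · intro hker
    obtain ⟨T, hT⟩ :=
      ((LinearMap.ker f).liftQ g hker ∘ₗ f.quotKerEquivRange.symm.toLinearMap).exists_extend
    refine ⟨T, LinearMap.ext fun x => ?_⟩
    simpa [LinearMap.quotKerEquivRange_symm_apply_image] using
      LinearMap.congr_fun hT ⟨f x, LinearMap.mem_range_self f x⟩

theorem exists_linearMap_apply_eq_iff_forall_sum_smul_eq_zero [Fintype ι] {v : ι → V}
    {w : ι → W} :
    (∃ T : V →ₗ[K] W, ∀ i, T (v i) = w i) ↔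
      ∀ c : ι → K, ∑ i, c i • v i = 0 → ∑ i, c i • w i = 0 := by
  classical
  have hcomp (T : V →ₗ[K] W) : (∀ i, T (v i) = w i) ↔
      T ∘ₗ Fintype.linearCombination K v = Fintype.linearCombination K w := by
    refine ⟨fun h => ?_, fun h i => ?_⟩
    · ext i
      simp [h i]
    · simpa using LinearMap.congr_fun h (Pi.single i 1)
  simp only [hcomp, exists_linearMap_comp_eq_iff_ker_le_ker, SetLike.le_def, LinearMap.mem_ker,
    Fintype.linearCombination_apply]

end LinearRelations

theorem exists_linearMap_apply_eq_perm_inv {R V ι : Type*} [Semiring R] [AddCommMonoid V]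
    [Module R V] {v : ι → V} {σ : Equiv.Perm ι} (hσ : IsOfFinOrder σ)
    (h : ∃ T : V →ₗ[R] V, ∀ i, T (v i) = v (σ i)) :
    ∃ T : V →ₗ[R] V, ∀ i, T (v i) = v (σ⁻¹ i) := by
  obtain ⟨T, hT⟩ := h
  obtain ⟨k, hk⟩ : ∃ k : ℕ, σ ^ k = σ⁻¹ :=
    hσ.mem_powers_iff_mem_zpowers.mpr (inv_mem (Subgroup.mem_zpowers σ))
  have hsemiconj : Function.Semiconj v σ T := fun i => (hT i).symm
  refine ⟨T ^ k, fun i => ?_⟩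
  rw [← hk, Module.End.coe_pow, Equiv.Perm.coe_pow, hsemiconj.iterate_right k]

section FrobeniusPowers

variable (F E : Type*) [Field F] [Fintype F] [Field E] [Algebra F E]

theorem coe_sum_smul_frobeniusAlgHom_pow {m : ℕ} (L : Fin m → E) :
    ⇑(∑ i, L i • (FiniteField.frobeniusAlgHom F E ^ (i : ℕ)).toLinearMap) =
      qPolyMap (Fintype.card F) L := by
  ext x
  simp [qPolyMap, FiniteField.coe_frobeniusAlgHom, pow_iterate]

variable [Finite E]

theorem span_range_frobeniusAlgHom_pow_eq_top :
    Submodule.span E (Set.range fun i : Fin (Module.finrank F E) =>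
      (FiniteField.frobeniusAlgHom F E ^ (i : ℕ)).toLinearMap) = ⊤ := by
  have hindep := (linearIndependent_algHom_toLinearMap F E E).comp _
    (FiniteField.bijective_frobeniusAlgHom_pow F E).injective
  exact hindep.span_eq_top_of_card_eq_finrank' (by
    rw [Module.finrank_linearMap_self, Fintype.card_fin])

theorem range_qPolyMap_eq_range_linearMap_coe :
    Set.range (qPolyMap (Fintype.card F) : (Fin (Module.finrank F E) → E) → E → E) =
      Set.range ((⇑) : (E →ₗ[F] E) → E → E) := by
  apply Set.Subset.antisymm
  · rintro _ ⟨L, rfl⟩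
    exact ⟨_, coe_sum_smul_frobeniusAlgHom_pow F E L⟩
  · rintro _ ⟨T, rfl⟩
    have hT := span_range_frobeniusAlgHom_pow_eq_top F E ▸ Submodule.mem_top (x := T)
    obtain ⟨L, rfl⟩ := (Submodule.mem_span_range_iff_exists_fun E).mp hT
    exact ⟨L, (coe_sum_smul_frobeniusAlgHom_pow F E L).symm⟩

end FrobeniusPowers

theorem permAut_iff_qPoly_general {F E ι : Type*} [Field F] [Fintype F] [Field E] [Finite E]
    [Algebra F E] [Fintype ι] (v : ι → E) (π : Equiv.Perm ι) :
    (∀ c : ι → F, ∑ i, c i • v i = 0 → ∑ i, c (π i) • v i = 0) ↔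
      ∃ L : Fin (Module.finrank F E) → E, ∀ i,
        qPolyMap (Fintype.card F) L (v i) = v (π i) := by
  have hreindex (c : ι → F) : ∑ i, c (π i) • v i = ∑ i, c i • v (π⁻¹ i) := by
    simpa using Equiv.sum_comp π fun i => c i • v (π⁻¹ i)
  calc
    _ ↔ ∃ T : E →ₗ[F] E, ∀ i, T (v i) = v (π⁻¹ i) := by
      simp only [hreindex, exists_linearMap_apply_eq_iff_forall_sum_smul_eq_zero]
    _ ↔ ∃ T : E →ₗ[F] E, ∀ i, T (v i) = v (π i) :=
      ⟨fun h => inv_inv π ▸ exists_linearMap_apply_eq_perm_inv (isOfFinOrder_of_finite π⁻¹) h,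
        exists_linearMap_apply_eq_perm_inv (isOfFinOrder_of_finite π)⟩
    _ ↔ _ := by
      rw [← Set.exists_range_iff (p := fun f : E → E => ∀ i, f (v i) = v (π i)),
        ← range_qPolyMap_eq_range_linearMap_coe, Set.exists_range_iff]

/-- for `ξ ∈ GF(qᵐ)*` of order `n` and degree `m` over `GF(q)`, a
permutation `π` of `{0, …, n-1}` is a permutation automorphism of the cyclic code
`C(n, q, {ξ})` iff there is a `q`-polynomial `L` over `GF(qᵐ)` with `L(ξⁱ) = ξ^{π(i)}`
for all `i = 0, …, n-1`. -/
theorem permAut_iff_qPoly {F E : Type*} [Field F] [Fintype F] [Field E] [Fintype E]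
    [Algebra F E] (m n : ℕ) (hm : 0 < m) (hrank : Module.finrank F E = m)
    (ξ : E) (hξ : ξ ≠ 0) (hdeg : (minpoly F ξ).natDegree = m) (hn : orderOf ξ = n)
    (π : Equiv.Perm (Fin n)) :
    (∀ c : Fin n → F, (∑ i : Fin n, algebraMap F E (c i) * ξ ^ (i : ℕ)) = 0 →
        (∑ i : Fin n, algebraMap F E (c (π i)) * ξ ^ (i : ℕ)) = 0) ↔
      ∃ L : Fin m → E, ∀ i : Fin n,
        qPolyMap (Fintype.card F) L (ξ ^ (i : ℕ)) = ξ ^ ((π i : ℕ)) := by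
  subst hrank
  simpa only [Algebra.smul_def] using permAut_iff_qPoly_general (fun i : Fin n => ξ ^ (i : ℕ)) π
end

section
/- Let q be a prime power and let φ be nonstandard of degree m over GF(q). Then every ξ ∈ GF(q^m)* such that ξ = λφ for some λ ∈ GF(q)* · ⟨φ⟩ — that is, every ξ in the subgroup GF(q)*·⟨φ⟩ with ⟨φ⟩ ⊆ ⟨ξ⟩ — is again nonstandard of degree m over GF(q), with the same q-order as φ; moreover every q-polynomial L(x) = L_0 x + ⋯ + L_{m−1}x^{q^{m−1}} over GF(q^m) with L(⟨φ⟩) = ⟨φ⟩ satisfies L(⟨ξ⟩) = ⟨ξ⟩. -/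
open Polynomial

/-!
If `ξ` is integral over `F` with minimal polynomial `f`, the `f`-sequences are exactly the
sequences `k ↦ T (ξ ^ k)` with `T` linear over `F`, and `T` restricts to an algebra homomorphism on
`F[ξ]` precisely when the initial terms are the powers of a zero of `f`. So `ξ` is nonstandard when
some linear `T` with `T 1 = 1` maps `⟨ξ⟩` onto itself without being an algebra homomorphism on
`F[ξ]`. A map `T` witnessing this for `φ` also witnesses it for `ξ = a φ ^ k` with `φ ∈ ⟨ξ⟩`: since
`F[ξ] = F[φ]`, only `T ⟨ξ⟩ = ⟨ξ⟩` is at stake, and linearity gives it because `⟨ξ⟩` contains `a` as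
well as `⟨φ⟩`.
-/

section Powers

variable {M : Type*} [Monoid M]

theorem powersOf_eq_coe_powers (ξ : M) : powersOf ξ = (Submonoid.powers ξ : Set M) := by
  ext x
  simp only [powersOf, Submonoid.coe_powers, Set.mem_range, Set.mem_ofPred_eq, eq_comm]

theorem image_powersOf_eq_range {α : Type*} (g : M → α) (ξ : M) :
    g '' powersOf ξ = Set.range fun k : ℕ => g (ξ ^ k) := by
  rw [powersOf_eq_coe_powers, Submonoid.coe_powers, ← Set.range_comp, Function.comp_def]

theorem ncard_powersOf {ξ : M} (hξ : IsOfFinOrder ξ) : (powersOf ξ).ncard = orderOf ξ := by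
  classical
  have hinj : Set.InjOn (ξ ^ ·) (Finset.range (orderOf ξ) : Set ℕ) := by
    simpa only [Finset.coe_range] using pow_injOn_Iio_orderOf
  rw [powersOf_eq_coe_powers, hξ.powers_eq_image_range_orderOf, Set.ncard_coe_finset,
    Finset.card_image_of_injOn hinj, Finset.card_range]

theorem mem_of_mul_mem_of_isOfFinOrder {S : Submonoid M} {x y : M} (hy : IsOfFinOrder y)
    (hyS : y ∈ S) (hxy : x * y ∈ S) : x ∈ S := by
  obtain ⟨n, hn, hpow⟩ := isOfFinOrder_iff_pow_eq_one.mp hy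
  have hx : x = x * y * y ^ (n - 1) := by
    rw [mul_assoc, mul_pow_sub_one hn.ne', hpow, mul_one]
  exact hx ▸ mul_mem hxy (pow_mem hyS _)

end Powers

theorem ncard_range_le_of_periodic {α : Type*} {u : ℕ → α} {p : ℕ} (hp : 0 < p)
    (hu : Function.Periodic u p) : (Set.range u).ncard ≤ p := by
  have hrange : Set.range u = u '' Finset.range p := by
    refine subset_antisymm ?_ (Set.image_subset_range _ _)
    rintro _ ⟨k, rfl⟩
    exact ⟨k % p, Finset.mem_coe.mpr (Finset.mem_range.mpr (Nat.mod_lt k hp)), hu.map_mod_nat k⟩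
  calc (Set.range u).ncard ≤ (Finset.range p : Set ℕ).ncard :=
        hrange ▸ Set.ncard_image_le (Finset.finite_toSet _)
    _ = p := by rw [Set.ncard_coe_finset, Finset.card_range]

section ScaledPowers

variable {R A : Type*} [CommSemiring R] [Semiring A] [Algebra R A] {φ ξ : A} {a : R} {k : ℕ}

theorem image_powers_eq_of_eq_mul (hφ : IsOfFinOrder φ)
    (hξ : ξ = algebraMap R A a * φ ^ k) (hsub : φ ∈ Submonoid.powers ξ) (T : A →ₗ[R] A)
    (hT : T '' Submonoid.powers φ = Submonoid.powers φ) :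
    T '' Submonoid.powers ξ = Submonoid.powers ξ := by
  have ha : algebraMap R A a ∈ Submonoid.powers ξ :=
    mem_of_mul_mem_of_isOfFinOrder (hφ.pow (n := k)) (pow_mem hsub k) (hξ ▸ Submonoid.mem_powers ξ)
  have hsmul {j : ℕ} {y : A} (hy : y ∈ Submonoid.powers φ) : a ^ j • y ∈ Submonoid.powers ξ := by
    rw [Algebra.smul_def, map_pow]
    exact mul_mem (pow_mem ha j) (Submonoid.powers_le.mpr hsub hy)
  have hpow (j : ℕ) : ξ ^ j = a ^ j • φ ^ (k * j) := by
    rw [hξ, ← Algebra.smul_def, _root_.smul_pow, pow_mul]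
  have hφmem (j : ℕ) : φ ^ (k * j) ∈ (Submonoid.powers φ : Set A) := ⟨_, rfl⟩
  apply Set.Subset.antisymm
  · rintro _ ⟨_, ⟨j, rfl⟩, rfl⟩
    simp only [hpow, map_smul]
    exact hsmul (hT.subset (Set.mem_image_of_mem T (hφmem j)))
  · rintro _ ⟨j, rfl⟩
    obtain ⟨y, hy, hTy⟩ := hT.superset (hφmem j)
    exact ⟨a ^ j • y, hsmul hy, by simp only [hpow, map_smul, hTy]⟩

theorem adjoin_singleton_eq_of_eq_mul (hξ : ξ = algebraMap R A a * φ ^ k)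
    (hsub : φ ∈ Submonoid.powers ξ) : Algebra.adjoin R {ξ} = Algebra.adjoin R {φ} := by
  have hφmem := Algebra.self_mem_adjoin_singleton R φ
  have hξmem := Algebra.self_mem_adjoin_singleton R ξ
  refine le_antisymm (Algebra.adjoin_singleton_le ?_) (Algebra.adjoin_singleton_le ?_)
  · exact hξ ▸ mul_mem (Subalgebra.algebraMap_mem _ a) (pow_mem hφmem k)
  · exact (Submonoid.powers_le (P := (Algebra.adjoin R {ξ}).toSubmonoid)).mpr hξmem hsub

end ScaledPowers

theorem qOrder_eq_of_eq_mul {F E : Type*} [Field F] [Field E] [Algebra F E] {φ ξ : E} {a : F}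
    {k : ℕ} (hξ : ξ = algebraMap F E a * φ ^ k) (hsub : φ ∈ Submonoid.powers ξ) :
    qOrder F ξ = qOrder F φ := by
  obtain ⟨i, hi⟩ := hsub
  have hmem (d : ℕ) : ξ ^ d ∈ (⊥ : Subalgebra F E) ↔ φ ^ d ∈ (⊥ : Subalgebra F E) := by
    constructor <;> intro h
    · rw [← hi, pow_right_comm]
      exact pow_mem h i
    · rw [hξ, mul_pow, pow_right_comm]
      exact mul_mem (pow_mem (Subalgebra.algebraMap_mem _ a) d) (pow_mem h k)
  simp only [Algebra.mem_bot] at hmem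
  simp only [qOrder, hmem]

section RecurringSequences

variable {F S E : Type*} [Field F] [CommRing S] [Algebra F S] [Field E] [Algebra F E]

theorem IsLRS.eq_of_initial {f : F[X]} {u v : ℕ → E} (hu : IsLRS f u) (hv : IsLRS f v)
    (h : ∀ k < f.natDegree, u k = v k) : u = v := by
  funext k
  induction k using Nat.strong_induction_on with
  | _ k ih =>
    rcases lt_or_ge k f.natDegree with hk | hk
    · exact h k hk
    · obtain ⟨j, rfl⟩ := Nat.exists_eq_add_of_le' hk
      rw [hu j, hv j]
      refine Finset.sum_congr rfl fun i hi => ?_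
      rw [ih (j + i) (Nat.add_lt_add_left (Finset.mem_range.mp hi) j)]

theorem isLRS_map_pow {f : F[X]} (hf : f.Monic) {ξ : S} (hξ : aeval ξ f = 0) (T : S →ₗ[F] E) :
    IsLRS f fun k => T (ξ ^ k) := by
  intro k
  have htop : ξ ^ f.natDegree = ∑ i ∈ Finset.range f.natDegree, (-f.coeff i) • ξ ^ i := by
    rw [aeval_eq_sum_range, Finset.sum_range_succ, hf.coeff_natDegree, one_smul] at hξ
    simp only [neg_smul, Finset.sum_neg_distrib]
    exact eq_neg_of_add_eq_zero_right hξ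
  simp only [pow_add, htop, Finset.mul_sum, mul_smul_comm, map_sum, map_smul,
    ← Algebra.smul_def]

theorem IsLRS.exists_linearMap {ξ : S} (hξ : IsIntegral F ξ) {u : ℕ → E}
    (hu : IsLRS (minpoly F ξ) u) : ∃ T : S →ₗ[F] E, ∀ k, T (ξ ^ k) = u k := by
  let pb := Algebra.adjoin.powerBasis hξ
  let T₀ : Algebra.adjoin F {ξ} →ₗ[F] E := pb.basis.constr F fun i => u i
  obtain ⟨T, hT⟩ := T₀.exists_extend (p := Subalgebra.toSubmodule (Algebra.adjoin F {ξ}))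
  have hinitial : ∀ k < (minpoly F ξ).natDegree, T (ξ ^ k) = u k := by
    intro k hk
    have hbasis := pb.basis.constr_basis F (fun i => u i) ⟨k, hk⟩
    rw [pb.basis_eq_pow] at hbasis
    exact (LinearMap.congr_fun hT _).trans hbasis
  have hLRS := isLRS_map_pow (minpoly.monic hξ) (minpoly.aeval F ξ) T
  exact ⟨T, congrFun (hLRS.eq_of_initial hu hinitial)⟩

theorem exists_algHom_adjoin_eq_iff {A : Type*} [Ring A] [Algebra F A] {ξ : S}
    (hξ : IsIntegral F ξ) (T : S →ₗ[F] A) :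
    (∃ σ : Algebra.adjoin F {ξ} →ₐ[F] A, ∀ x : Algebra.adjoin F {ξ}, T x = σ x) ↔
      ∃ ζ : A, aeval ζ (minpoly F ξ) = 0 ∧
        ∀ i < (minpoly F ξ).natDegree, T (ξ ^ i) = ζ ^ i := by
  let pb := Algebra.adjoin.powerBasis hξ
  have hmin : minpoly F pb.gen = minpoly F ξ :=
    (minpoly.algHom_eq (Algebra.adjoin F {ξ}).val Subtype.val_injective pb.gen).symm
  constructor
  · rintro ⟨σ, hσ⟩
    refine ⟨σ pb.gen, ?_, fun i _ => ?_⟩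
    · rw [aeval_algHom_apply, ← hmin, minpoly.aeval, map_zero]
    · rw [← map_pow, ← hσ]
      rfl
  · rintro ⟨ζ, hζ, hpow⟩
    let σ := pb.lift ζ (hmin ▸ hζ)
    have hT : T ∘ₗ (Algebra.adjoin F {ξ}).val.toLinearMap = σ.toLinearMap := by
      refine pb.basis.ext fun i => ?_
      rw [AlgHom.toLinearMap_apply, pb.basis_eq_pow, map_pow σ, pb.lift_gen]
      exact hpow i i.isLt
    exact ⟨σ, LinearMap.congr_fun hT⟩

end RecurringSequences

theorem natDegree_minpoly_eq_finrank_adjoin {F S : Type*} [Field F] [CommRing S] [Algebra F S]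
    {ξ : S} (hξ : IsIntegral F ξ) :
    (minpoly F ξ).natDegree = Module.finrank F (Algebra.adjoin F {ξ}) :=
  (Algebra.adjoin.powerBasis hξ).finrank.symm

theorem isIntegral_of_isOfFinOrder {R A : Type*} [CommRing R] [Ring A] [Algebra R A] {x : A}
    (hx : IsOfFinOrder x) : IsIntegral R x := by
  obtain ⟨n, hn, hpow⟩ := isOfFinOrder_iff_pow_eq_one.mp hx
  exact .of_pow hn (hpow ▸ isIntegral_one)

section Nonstandard

variable {F E : Type*} [Field F] [Field E] [Algebra F E] {m : ℕ} {ξ : E}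

theorem IsNonstandard.isOfFinOrder (hξ : IsNonstandard F m ξ) : IsOfFinOrder ξ := by
  obtain ⟨-, u, -, ⟨⟨hpos, -⟩, -⟩, -⟩ := hξ
  exact orderOf_pos_iff.mp hpos

theorem IsNonstandard.ne_one (hξ : IsNonstandard F m ξ) : ξ ≠ 1 := by
  rintro rfl
  obtain ⟨hdeg, u, -, -, -, hu0, hne⟩ := hξ
  obtain ⟨i, hi⟩ := hne 1 (minpoly.aeval F 1)
  obtain rfl : m = 1 := hdeg.symm.trans (minpoly.natDegree_eq_one_iff.mpr (one_mem _))
  obtain rfl := Subsingleton.elim i 0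
  exact hi (by simpa using hu0)

theorem isNonstandard_iff_exists_linearMap (hξ : IsOfFinOrder ξ) :
    IsNonstandard F m ξ ↔ (minpoly F ξ).natDegree = m ∧
      ∃ T : E →ₗ[F] E, T '' powersOf ξ = powersOf ξ ∧ T 1 = 1 ∧
        ¬∃ σ : Algebra.adjoin F {ξ} →ₐ[F] E, ∀ x : Algebra.adjoin F {ξ}, T x = σ x := by
  have hint : IsIntegral F ξ := isIntegral_of_isOfFinOrder hξ
  refine and_congr_right ?_
  rintro rfl
  simp only [exists_algHom_adjoin_eq_iff hint, image_powersOf_eq_range, not_exists, not_and,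
    not_forall]
  constructor
  · rintro ⟨u, hu, -, hrange, hu0, hne⟩
    obtain ⟨T, hT⟩ := hu.exists_linearMap hint
    refine ⟨T, by simpa only [hT] using hrange, by simpa [hu0] using hT 0, fun ζ hζ => ?_⟩
    obtain ⟨i, hi⟩ := hne ζ hζ
    exact ⟨i, i.isLt, hT i ▸ hi⟩
  · rintro ⟨T, hrange, hT1, hne⟩
    have hleast (p : ℕ) (hp : 0 < p) (hper : ∀ k, T (ξ ^ (k + p)) = T (ξ ^ k)) :
        orderOf ξ ≤ p := by
      rw [← ncard_powersOf hξ, ← hrange]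
      exact ncard_range_le_of_periodic hp hper
    refine ⟨fun k => T (ξ ^ k), isLRS_map_pow (minpoly.monic hint) (minpoly.aeval F ξ) T,
      ⟨⟨hξ.orderOf_pos, fun k => ?_⟩, fun p hp => hleast p hp.1 hp.2⟩, hrange,
      by simpa using hT1, fun ζ hζ => ?_⟩
    · simp only [pow_add, pow_orderOf_eq_one, mul_one]
    · obtain ⟨i, hi, hTi⟩ := hne ζ hζ
      exact ⟨⟨i, hi⟩, hTi⟩

end Nonstandard

/-- The `q`-polynomial map with coefficient vector `c` as a linear map over `F = GF(q)`. -/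
noncomputable def qPolyLinearMap (F : Type*) {E : Type*} [Field F] [Fintype F] [Field E]
    [Algebra F E] {m : ℕ} (c : Fin m → E) : E →ₗ[F] E :=
  ∑ i : Fin m, c i • ((FiniteField.frobeniusAlgHom F E) ^ (i : ℕ)).toLinearMap

theorem coe_qPolyLinearMap {F E : Type*} [Field F] [Fintype F] [Field E] [Algebra F E]
    {m : ℕ} (c : Fin m → E) : ⇑(qPolyLinearMap F c) = qPolyMap (Fintype.card F) c := by
  funext x
  simp [qPolyLinearMap, qPolyMap, FiniteField.coe_frobeniusAlgHom, AlgHom.coe_pow, pow_iterate]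

theorem extension_theorem_general {F E : Type*} [Field F] [Field E] [Algebra F E] {m : ℕ}
    {φ ξ : E} (hφ : IsNonstandard F m φ)
    (hmem : ∃ (a : F) (k : ℕ), ξ = algebraMap F E a * φ ^ k) (hsub : ∃ i : ℕ, φ = ξ ^ i) :
    IsNonstandard F m ξ ∧ qOrder F ξ = qOrder F φ ∧
      ∀ T : E →ₗ[F] E, T '' powersOf φ = powersOf φ → T '' powersOf ξ = powersOf ξ := by
  obtain ⟨a, k, hξ⟩ := hmem
  obtain ⟨i, hi⟩ := hsub
  have hφfin : IsOfFinOrder φ := hφ.isOfFinOrder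
  have hi0 : i ≠ 0 := by
    rintro rfl
    exact hφ.ne_one (hi.trans (pow_zero ξ))
  have hξfin : IsOfFinOrder ξ := (hi ▸ hφfin).of_pow hi0
  have hφmem : φ ∈ Submonoid.powers ξ := ⟨i, hi.symm⟩
  have hadjoin := adjoin_singleton_eq_of_eq_mul hξ hφmem
  have himage (T : E →ₗ[F] E) (hT : T '' powersOf φ = powersOf φ) :
      T '' powersOf ξ = powersOf ξ := by
    rw [powersOf_eq_coe_powers] at hT ⊢
    exact image_powers_eq_of_eq_mul hφfin hξ hφmem T hT
  refine ⟨?_, qOrder_eq_of_eq_mul hξ hφmem, himage⟩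
  obtain ⟨hdeg, T, hT, hT1, hne⟩ := (isNonstandard_iff_exists_linearMap hφfin).mp hφ
  refine (isNonstandard_iff_exists_linearMap hξfin).mpr ⟨?_, T, himage T hT, hT1, ?_⟩
  · rw [natDegree_minpoly_eq_finrank_adjoin (isIntegral_of_isOfFinOrder hξfin), hadjoin,
      ← natDegree_minpoly_eq_finrank_adjoin (isIntegral_of_isOfFinOrder hφfin), hdeg]
  · rwa [hadjoin]

/-- extension theorem: if `φ` is nonstandard of degree `m` over `GF(q)`,
then every `ξ ∈ GF(q)*·⟨φ⟩` with `⟨φ⟩ ⊆ ⟨ξ⟩` (i.e. `ξ = λ·φᵏ` and `φ = ξⁱ`) is again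
nonstandard of degree `m` over `GF(q)` with the same `q`-order as `φ`; moreover every
`q`-polynomial `L` over `GF(qᵐ)` with `L(⟨φ⟩) = ⟨φ⟩` satisfies `L(⟨ξ⟩) = ⟨ξ⟩`. -/
theorem extension_theorem {F E : Type*} [Field F] [Fintype F] [Field E] [Fintype E]
    [Algebra F E] (m : ℕ) (hm : 0 < m) (hrank : Module.finrank F E = m)
    (φ : E) (hφ : IsNonstandard F m φ)
    (ξ : E) (hξ0 : ξ ≠ 0)
    (hmem : ∃ (a : F) (k : ℕ), a ≠ 0 ∧ ξ = algebraMap F E a * φ ^ k)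
    (hsub : ∃ i : ℕ, φ = ξ ^ i) :
    IsNonstandard F m ξ ∧ qOrder F ξ = qOrder F φ ∧
      ∀ c : Fin m → E,
        qPolyMap (Fintype.card F) c '' powersOf φ = powersOf φ →
        qPolyMap (Fintype.card F) c '' powersOf ξ = powersOf ξ := by
  obtain ⟨a, k, -, hξ⟩ := hmem
  obtain ⟨hns, hord, himage⟩ := extension_theorem_general hφ ⟨a, k, hξ⟩ hsub
  exact ⟨hns, hord, fun c => coe_qPolyLinearMap (F := F) c ▸ himage (qPolyLinearMap F c)⟩
end

section
/- Let q be a prime power of characteristic p, and let ξ be nonstandard of degree 2 over GF(q) with q-order ord_q(ξ) = 5 and minimal polynomial x² − σ_1 x − σ_0 over GF(q) (necessarily σ_1 ≠ 0). Then p = 2 and ξ/σ_1 has multiplicative order 15, i.e., ξ/σ_1 is a primitive element of the subfield GF(16) of GF(q²). -/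
open Polynomial

/-!
Let `η` be the conjugate of `ξ`. A nonstandard sequence has the form `u k = a ξ ^ k + b η ^ k` with
`a, b ≠ 0` and `a + b = 1`. Since every `u k` is a power of `ξ`, replacing `ξ` by `η` in these
powers gives another sequence `v k = β ξ ^ k + α η ^ k` satisfying the same recurrence.

If `ζ = η / ξ` is a primitive `n`-th root of unity, then `ξ ^ n = η ^ n`, hence `u k ^ n = v k ^ n`,
that is, `(a + b z) ^ n = (α z + β) ^ n` at all `n`-th roots of unity `z`. Only the coefficients of
`1` and `z ^ n` can mix here, so those of `z` and `z ^ 2` agree. If `n.choose 2 ≠ 0`, this forces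
`α = b` and `β = a`, so `u = v`; but `ξ` occurs in `u` where `η` occurs in `v`. Thus `n.choose 2`
vanishes.

In the theorem `ζ ^ 5 = 1`, because `ξ ^ 5` is its own conjugate, and `ζ ≠ 1`, because `η = ξ` would
put `ξ ^ 2 = ξ * η` and `ξ ^ 5`, hence `ξ`, in the base field. So `10 = 0` while `5 ≠ 0`, and the
characteristic is two. Finally `ξ / σ₁ = ξ / (ξ + η) = (1 + ζ)⁻¹`, where `(1 + ζ) ^ 3 = ζ ^ 4`.
-/

theorem coeff_C_mul_X_add_C_pow {R : Type*} [CommSemiring R] (a b : R) (n i : ℕ) :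
    ((C a * X + C b) ^ n).coeff i = a ^ i * b ^ (n - i) * n.choose i := by
  have hcomp : (C a * X + C b) ^ n = ((X + C b) ^ n).comp (C a * X) := by simp
  rw [hcomp, comp_C_mul_X_coeff, coeff_X_add_C_pow]
  ring

section Domain

variable {R : Type*} [CommRing R] [IsDomain R]

theorem mul_pow_mul_choose_eq_of_forall_pow_eq {ζ : R} {n : ℕ} (hζ : IsPrimitiveRoot ζ n)
    {a b α β : R} (h : ∀ k : ℕ, (α * ζ ^ k + β) ^ n = (b * ζ ^ k + a) ^ n) {i : ℕ}
    (hi : 0 < i) (hin : i < n) :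
    α ^ i * β ^ (n - i) * n.choose i = b ^ i * a ^ (n - i) * n.choose i := by
  -- Subtracting the multiple of `X ^ n - 1` that cancels the leading terms leaves a polynomial of
  -- degree less than `n` with `n` zeros.
  let d : R[X] := (C α * X + C β) ^ n - (C b * X + C a) ^ n - C (α ^ n - b ^ n) * (X ^ n - 1)
  have hdcoeff (j : ℕ) : d.coeff j = α ^ j * β ^ (n - j) * n.choose j
      - b ^ j * a ^ (n - j) * n.choose j
      - (α ^ n - b ^ n) * ((if j = n then 1 else 0) - if j = 0 then 1 else 0) := by
    simp only [d, coeff_sub, coeff_C_mul, coeff_C_mul_X_add_C_pow, coeff_X_pow, coeff_one]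
  have hdeg : d.degree < n := by
    rw [degree_lt_iff_coeff_zero]
    intro j hj
    rcases hj.eq_or_lt with rfl | hj
    · simp [hdcoeff, (hi.trans hin).ne']
    · simp [hdcoeff, Nat.choose_eq_zero_of_lt hj, hj.ne', (Nat.zero_lt_of_lt hj).ne']
  have heval (k : Fin n) : d.eval (ζ ^ (k : ℕ)) = 0 := by
    have hk : (ζ ^ (k : ℕ)) ^ n = 1 := by rw [pow_right_comm, hζ.pow_eq_one, one_pow]
    simp [d, h, hk]
  have hinj : Function.Injective fun k : Fin n => ζ ^ (k : ℕ) :=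
    fun k l hkl => Fin.ext (hζ.pow_inj k.isLt l.isLt hkl)
  have hd : d = 0 := eq_zero_of_degree_lt_of_eval_index_eq_zero Finset.univ
    hinj.injOn (by simpa using hdeg) fun k _ => heval k
  have hcoeff := hdcoeff i
  rw [hd, coeff_zero, if_neg hin.ne, if_neg hi.ne', sub_zero, mul_zero, sub_zero] at hcoeff
  exact sub_eq_zero.mp hcoeff.symm

theorem eq_and_eq_of_mul_pow_eq {a b α β : R} {m : ℕ} (ha : a ≠ 0) (hb : b ≠ 0)
    (hab : a + b ≠ 0) (hsum : α + β = a + b) (h1 : α * β ^ (m + 1) = b * a ^ (m + 1))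
    (h2 : α ^ 2 * β ^ m = b ^ 2 * a ^ m) : α = b ∧ β = a := by
  have hcross : β * b = α * a := by
    apply mul_left_cancel₀ (mul_ne_zero (pow_ne_zero m ha) hb)
    linear_combination α * h1 - β * h2
  have hβ : β = a := by
    apply mul_right_cancel₀ hab
    linear_combination hcross + a * hsum
  exact ⟨by linear_combination hsum - hβ, hβ⟩

theorem orderOf_one_add_of_isPrimitiveRoot_five [CharP R 2] {ζ : R} (hζ : IsPrimitiveRoot ζ 5) :
    orderOf (1 + ζ) = 15 := by
  have h2 : (2 : R) = 0 := CharTwo.two_eq_zero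
  have hζ0 : ζ ≠ 0 := hζ.ne_zero (by norm_num)
  have hgeom : 1 + ζ + ζ ^ 2 + ζ ^ 3 + ζ ^ 4 = 0 := by
    simpa [Finset.sum_range_succ] using hζ.geom_sum_eq_zero (by norm_num)
  have hcube : (1 + ζ) ^ 3 = ζ ^ 4 := by
    linear_combination hgeom + (ζ + ζ ^ 2 - ζ ^ 4) * h2
  have hfifth : (1 + ζ) ^ 5 = 1 + ζ ^ 2 * (1 + ζ) := by
    linear_combination (1 + ζ) ^ 2 * hcube + hζ.pow_eq_one * (ζ + 2) + hgeom - (ζ ^ 2 + ζ ^ 3) * h2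
  have hone_add : 1 + ζ ≠ 0 := by
    intro h
    rw [h, zero_pow three_ne_zero] at hcube
    exact pow_ne_zero 4 hζ0 hcube.symm
  have hpow : (1 + ζ) ^ 15 = 1 :=
    calc (1 + ζ) ^ 15 = ((1 + ζ) ^ 3) ^ 5 := by ring
      _ = (ζ ^ 5) ^ 4 := by rw [hcube]; ring
      _ = 1 := by rw [hζ.pow_eq_one, one_pow]
  refine orderOf_eq_of_pow_and_pow_div_prime (by norm_num) hpow fun p hp hdvd => ?_
  have hp35 : p = 3 ∨ p = 5 := by
    rw [show 15 = 3 * 5 from rfl, hp.dvd_mul] at hdvd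
    exact hdvd.imp (Nat.prime_dvd_prime_iff_eq hp Nat.prime_three).mp
      (Nat.prime_dvd_prime_iff_eq hp Nat.prime_five).mp
  rcases hp35 with rfl | rfl
  · change (1 + ζ) ^ 5 ≠ 1
    rw [hfifth, Ne, add_eq_left]
    exact mul_ne_zero (pow_ne_zero 2 hζ0) hone_add
  · change (1 + ζ) ^ 3 ≠ 1
    rw [hcube]
    exact hζ.pow_ne_one_of_pos_of_lt (by norm_num) (by norm_num)

end Domain

theorem orderOf_inv' {G : Type*} [DivisionMonoid G] (x : G) : orderOf x⁻¹ = orderOf x :=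
  orderOf_eq_orderOf_iff.mpr fun n => by rw [inv_pow, inv_eq_one]

theorem mem_of_sq_mem_of_odd_pow_mem {E : Type*} [DivisionRing E] (K : Subfield E) {x : E}
    {n : ℕ} (hn : Odd n) (hsq : x ^ 2 ∈ K) (hpow : x ^ n ∈ K) : x ∈ K := by
  obtain ⟨m, rfl⟩ := hn
  rcases eq_or_ne x 0 with rfl | hx
  · exact K.zero_mem
  · have hdiv : x = x ^ (2 * m + 1) / (x ^ 2) ^ m := by
      rw [← pow_mul, pow_succ', mul_div_cancel_right₀ _ (pow_ne_zero _ hx)]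
    rw [hdiv]
    exact K.div_mem hpow (K.pow_mem hsq m)

theorem exists_closed_form_of_recurrence {E : Type*} [Field E] {x y : E} (hxy : x ≠ y)
    {u : ℕ → E} (hu : ∀ k, u (k + 2) = (x + y) * u (k + 1) - x * y * u k) :
    ∃ a b : E, ∀ k, u k = a * x ^ k + b * y ^ k := by
  have hne : x - y ≠ 0 := sub_ne_zero.mpr hxy
  refine ⟨(u 1 - y * u 0) / (x - y), (x * u 0 - u 1) / (x - y), fun k => ?_⟩
  induction k using Nat.twoStepInduction with
  | zero => field_simp; ring
  | one => field_simp; ring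
  | more k ih0 ih1 => rw [hu, ih0, ih1]; ring

theorem aeval_eq_aeval_of_aeval_minpoly_eq_zero {F A B : Type*} [Field F] [Ring A] [Ring B]
    [Algebra F A] [Algebra F B] {x : A} {y : B} (hy : aeval y (minpoly F x) = 0) {p q : F[X]}
    (h : aeval x p = aeval x q) : aeval y p = aeval y q := by
  have hdvd : minpoly F x ∣ p - q := minpoly.dvd F x (by rw [map_sub, h, sub_self])
  exact sub_eq_zero.mp (by rw [← map_sub, aeval_eq_zero_of_dvd_aeval_eq_zero hdvd hy])

section Conjugates

variable {F E : Type*} [Field F] [Field E] [Algebra F E] {ξ η : E}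

theorem pow_qOrder_mem_range (h : qOrder F ξ ≠ 0) :
    ξ ^ qOrder F ξ ∈ Set.range (algebraMap F E) :=
  (Nat.sInf_mem (Nat.nonempty_of_pos_sInf (Nat.pos_of_ne_zero h))).2

theorem IsLRS.exists_conj {f : F[X]} {u : ℕ → E} (hu : IsLRS f u)
    (hξ : ∀ k, u k ∈ powersOf ξ) (hη : aeval η (minpoly F ξ) = 0) :
    ∃ v : ℕ → E, IsLRS f v ∧ ∀ k i, u k = ξ ^ i → v k = η ^ i := by
  choose e he using hξ
  have aeval_sum (x : E) (k : ℕ) :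
      aeval x (∑ i ∈ Finset.range f.natDegree, C (-f.coeff i) * X ^ e (k + i)) =
        ∑ i ∈ Finset.range f.natDegree, algebraMap F E (-f.coeff i) * x ^ e (k + i) := by
    simp only [map_sum, map_mul, aeval_C, map_pow, aeval_X]
  refine ⟨fun k => η ^ e k, fun k => ?_, fun k i hi => ?_⟩
  · have hrel : aeval ξ (X ^ e (k + f.natDegree) : F[X]) =
        aeval ξ (∑ i ∈ Finset.range f.natDegree, C (-f.coeff i) * X ^ e (k + i)) := by
      simpa only [aeval_sum, aeval_X_pow, ← he] using hu k
    simpa only [aeval_sum, aeval_X_pow] using aeval_eq_aeval_of_aeval_minpoly_eq_zero hη hrel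
  · have hrel : aeval ξ (X ^ e k : F[X]) = aeval ξ (X ^ i : F[X]) := by
      rw [aeval_X_pow, aeval_X_pow, ← he, hi]
    simpa only [aeval_X_pow] using aeval_eq_aeval_of_aeval_minpoly_eq_zero hη hrel

theorem natDegree_eq_two_of_map_eq_mul {f : F[X]} {x y : E}
    (hf : f.map (algebraMap F E) = (X - C x) * (X - C y)) : f.natDegree = 2 := by
  rw [← natDegree_map (algebraMap F E), hf,
    natDegree_mul (X_sub_C_ne_zero x) (X_sub_C_ne_zero y), natDegree_X_sub_C, natDegree_X_sub_C]

theorem IsLRS.add_two {f : F[X]} {x y : E}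
    (hf : f.map (algebraMap F E) = (X - C x) * (X - C y)) {u : ℕ → E} (hu : IsLRS f u) (k : ℕ) :
    u (k + 2) = (x + y) * u (k + 1) - x * y * u k := by
  have hcoeff0 : algebraMap F E (f.coeff 0) = x * y := by
    rw [← coeff_map, hf]
    simp [mul_coeff_zero]
  have hcoeff1 : algebraMap F E (f.coeff 1) = -(x + y) := by
    rw [← coeff_map, hf]
    simp [mul_coeff_one, add_comm]
  have hk := hu k
  rw [natDegree_eq_two_of_map_eq_mul hf, Finset.sum_range_succ, Finset.sum_range_one,
    map_neg, map_neg, hcoeff0, hcoeff1] at hk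
  rw [hk, add_zero]
  ring

theorem map_minpoly_eq_mul_of_quadratic {s t : F} (hmin : minpoly F ξ = X ^ 2 - C s * X - C t) :
    (minpoly F ξ).map (algebraMap F E) = (X - C ξ) * (X - C (algebraMap F E s - ξ)) := by
  have hroot : ξ ^ 2 - algebraMap F E s * ξ - algebraMap F E t = 0 := by
    simpa [hmin] using minpoly.aeval F ξ
  have hconst : algebraMap F E t = ξ ^ 2 - algebraMap F E s * ξ := by linear_combination -hroot
  simp only [hmin, Polynomial.map_sub, Polynomial.map_mul, Polynomial.map_pow, map_X, map_C,
    hconst, C_sub, C_mul, C_pow]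
  ring

theorem aeval_minpoly_eq_zero_of_map_eq_mul
    (hf : (minpoly F ξ).map (algebraMap F E) = (X - C ξ) * (X - C η)) :
    aeval η (minpoly F ξ) = 0 := by
  rw [aeval_def, ← eval_map, hf]
  simp

theorem isPrimitiveRoot_conj_div
    (hf : (minpoly F ξ).map (algebraMap F E) = (X - C ξ) * (X - C η)) {p : ℕ}
    (hp : p.Prime) (hodd : Odd p) (hpow : ξ ^ p ∈ Set.range (algebraMap F E)) :
    IsPrimitiveRoot (η / ξ) p := by
  have hdeg2 := natDegree_eq_two_of_map_eq_mul hf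
  have hξ : ξ ∉ (algebraMap F E).fieldRange := by
    intro h
    have hdeg := minpoly.natDegree_eq_one_iff.mpr (show ξ ∈ (algebraMap F E).range from h)
    omega
  have hξ0 : ξ ≠ 0 := fun h => hξ (h ▸ zero_mem _)
  have hne : η ≠ ξ := by
    rintro rfl
    refine hξ (mem_of_sq_mem_of_odd_pow_mem _ hodd ⟨(minpoly F η).coeff 0, ?_⟩ hpow)
    rw [← coeff_map, hf]
    simp [mul_coeff_zero, sq]
  have hconj : η ^ p = ξ ^ p := by
    obtain ⟨c, hc⟩ := hpow
    have hξc : aeval ξ (X ^ p : F[X]) = aeval ξ (C c) := by rw [aeval_X_pow, aeval_C, hc]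
    have hηc := aeval_eq_aeval_of_aeval_minpoly_eq_zero
      (aeval_minpoly_eq_zero_of_map_eq_mul hf) hξc
    rwa [aeval_X_pow, aeval_C, hc] at hηc
  have : Fact p.Prime := ⟨hp⟩
  refine IsPrimitiveRoot.iff_orderOf.mpr (orderOf_eq_prime ?_ ?_)
  · rw [div_pow, hconj, div_self (pow_ne_zero p hξ0)]
  · rwa [Ne, div_eq_one_iff_eq hξ0]

theorem IsNonstandard.exists_conj_closed_forms (hns : IsNonstandard F 2 ξ)
    (hf : (minpoly F ξ).map (algebraMap F E) = (X - C ξ) * (X - C η)) (hne : ξ ≠ η) :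
    ∃ a b α β : E, a ≠ 0 ∧ b ≠ 0 ∧ a + b = 1 ∧ α + β = 1 ∧ ¬(α = b ∧ β = a) ∧
      ∀ k, ∃ i, a * ξ ^ k + b * η ^ k = ξ ^ i ∧ β * ξ ^ k + α * η ^ k = η ^ i := by
  obtain ⟨-, u, hu, -, hrange, hu0, hstd⟩ := hns
  have hmem (k : ℕ) : u k ∈ powersOf ξ := hrange ▸ Set.mem_range_self k
  have hroot : aeval η (minpoly F ξ) = 0 := aeval_minpoly_eq_zero_of_map_eq_mul hf
  obtain ⟨v, hv, hconj⟩ := hu.exists_conj hmem hroot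
  obtain ⟨a, b, hab⟩ := exists_closed_form_of_recurrence hne (hu.add_two hf)
  obtain ⟨β, α, hαβ⟩ := exists_closed_form_of_recurrence hne (hv.add_two hf)
  have hv0 : v 0 = 1 := by simpa using hconj 0 0 (by simpa using hu0)
  have hab1 : a + b = 1 := by simpa [hab] using hu0
  have hαβ1 : α + β = 1 := by simpa [hαβ, add_comm] using hv0
  refine ⟨a, b, α, β, ?_, ?_, hab1, hαβ1, ?_, fun k => ?_⟩
  · rintro rfl
    obtain ⟨i, hi⟩ := hstd η hroot
    exact hi (by rw [hab, ← zero_add b, hab1]; ring)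
  · rintro rfl
    obtain ⟨i, hi⟩ := hstd ξ (minpoly.aeval F ξ)
    exact hi (by rw [hab, ← add_zero a, hab1]; ring)
  · rintro ⟨rfl, rfl⟩
    obtain ⟨k, hk⟩ : ξ ∈ Set.range u := hrange ▸ ⟨1, (pow_one ξ).symm⟩
    have hvk : v k = η := by simpa using hconj k 1 (by simpa using hk)
    exact hne (by rw [← hk, ← hvk, hab, hαβ])
  · obtain ⟨i, hi⟩ := hmem k
    exact ⟨i, by rw [← hab, hi], by rw [← hαβ, hconj k i hi]⟩

theorem IsNonstandard.choose_two_eq_zero (hns : IsNonstandard F 2 ξ)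
    (hf : (minpoly F ξ).map (algebraMap F E) = (X - C ξ) * (X - C η)) {n : ℕ}
    (hn : 3 ≤ n) (hζ : IsPrimitiveRoot (η / ξ) n) : (n.choose 2 : E) = 0 := by
  obtain ⟨m, rfl⟩ : ∃ m, n = m + 3 := ⟨n - 3, by omega⟩
  have hξ0 : ξ ≠ 0 := by
    rintro rfl
    exact hζ.ne_zero (by omega) (div_zero η)
  have hne : ξ ≠ η := by
    rintro rfl
    exact hζ.ne_one (by omega) (div_self hξ0)
  have hηξ : η ^ (m + 3) = ξ ^ (m + 3) := by
    rw [← div_eq_one_iff_eq (pow_ne_zero _ hξ0), ← div_pow, hζ.pow_eq_one]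
  obtain ⟨a, b, α, β, ha, hb, hab, hαβ, hswap, hpow⟩ := hns.exists_conj_closed_forms hf hne
  have heq (k : ℕ) :
      (α * (η / ξ) ^ k + β) ^ (m + 3) = (b * (η / ξ) ^ k + a) ^ (m + 3) := by
    obtain ⟨i, hu, hv⟩ := hpow k
    have hfactor (c d : E) : c * (η / ξ) ^ k + d = (d * ξ ^ k + c * η ^ k) / ξ ^ k := by
      rw [div_pow, add_div, mul_div_cancel_right₀ _ (pow_ne_zero k hξ0), mul_div_assoc, add_comm]
    rw [hfactor, hfactor, hu, hv, div_pow, div_pow, pow_right_comm η, hηξ, pow_right_comm ξ i]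
  by_contra hchoose
  have hcoeff1 : α * β ^ (m + 2) = b * a ^ (m + 2) := by
    have hcast : ((m + 3).choose 1 : E) ≠ 0 := by
      simpa using hζ.neZero'.ne
    simpa using mul_right_cancel₀ hcast
      (mul_pow_mul_choose_eq_of_forall_pow_eq hζ heq one_pos (by omega))
  have hcoeff2 : α ^ 2 * β ^ (m + 1) = b ^ 2 * a ^ (m + 1) := by
    simpa using mul_right_cancel₀ hchoose
      (mul_pow_mul_choose_eq_of_forall_pow_eq hζ heq two_pos (by omega))
  exact hswap (eq_and_eq_of_mul_pow_eq ha hb (by simp [hab]) (by rw [hαβ, hab]) hcoeff1 hcoeff2)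

end Conjugates

theorem nonstandard_qOrder_five_general {F E : Type*} [Field F] [Field E] [Algebra F E]
    (ξ : E) (σ1 σ0 : F)
    (hmin : minpoly F ξ = X ^ 2 - C σ1 * X - C σ0)
    (hns : IsNonstandard F 2 ξ) (hd : qOrder F ξ = 5) :
    ringChar F = 2 ∧ σ1 ≠ 0 ∧ orderOf (ξ / algebraMap F E σ1) = 15 := by
  have hfactor := map_minpoly_eq_mul_of_quadratic hmin
  have hpow : ξ ^ 5 ∈ Set.range (algebraMap F E) := hd ▸ pow_qOrder_mem_range (by omega)
  set η := algebraMap F E σ1 - ξ with hη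
  have hζ : IsPrimitiveRoot (η / ξ) 5 :=
    isPrimitiveRoot_conj_div hfactor Nat.prime_five (by decide) hpow
  have h10 : (2 : E) * (5 : ℕ) = 0 :=
    mod_cast hns.choose_two_eq_zero hfactor (by norm_num) hζ
  have h2 : (2 : E) = 0 := (mul_eq_zero.mp h10).resolve_right hζ.neZero'.ne
  have h2F : (2 : F) = 0 := (map_eq_zero (algebraMap F E)).mp (by rwa [map_ofNat])
  have hchar : CharP E 2 := CharTwo.of_one_ne_zero_of_two_eq_zero one_ne_zero h2
  have hξ0 : ξ ≠ 0 := by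
    intro h
    exact hζ.ne_zero (by norm_num) (by rw [h, div_zero])
  have horder : orderOf (ξ / algebraMap F E σ1) = 15 := by
    have hσ1 : algebraMap F E σ1 = ξ * (1 + η / ξ) := by rw [hη]; field_simp; ring
    rw [hσ1, div_mul_cancel_left₀ hξ0, orderOf_inv', orderOf_one_add_of_isPrimitiveRoot_five hζ]
  refine ⟨CharP.ringChar_of_prime_eq_zero Nat.prime_two h2F, ?_, horder⟩
  rintro rfl
  simp at horder

/-- if `ξ` is nonstandard of degree `2` over `GF(q)` (characteristic `p`)
with `q`-order `5` and minimal polynomial `x² - σ₁x - σ₀` (necessarily `σ₁ ≠ 0`), then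
`p = 2` and `ξ/σ₁` has multiplicative order `15`, i.e. `ξ/σ₁` is a primitive element of
the subfield `GF(16)` of `GF(q²)`. -/
theorem nonstandard_qOrder_five {F E : Type*} [Field F] [Fintype F] [Field E] [Fintype E]
    [Algebra F E] (hrank : Module.finrank F E = 2)
    (ξ : E) (σ1 σ0 : F)
    (hmin : minpoly F ξ = X ^ 2 - C σ1 * X - C σ0)
    (hns : IsNonstandard F 2 ξ) (hd : qOrder F ξ = 5) :
    ringChar F = 2 ∧ σ1 ≠ 0 ∧ orderOf (ξ / algebraMap F E σ1) = 15 :=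
  nonstandard_qOrder_five_general ξ σ1 σ0 hmin hns hd
end
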